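/- Let q = ℓ² where ℓ = d² + 2 ≡ 3 (mod 8) is a prime power and d is an integer. Then, in F_q, the set D = C_0^8 ∪ C_1^8 ∪ C_2^8 ∪ C_5^8 is a skew Paley (q,(q−1)/2,(q−5)/4,(q−1)/4)-PDS corresponding to the Paley PDS C_0^2. -/

import Mathlib

open Finset

section Defs

variable {G : Type*} [AddCommGroup G] [Fintype G] [DecidableEq G]

/-- The multiset `Δ(D)` of internal differences `x - y` (for `x ≠ y` in `D`). -/
def intDiff (D : Finset G) : Multiset G :=
  ((D ×ˢ D).filter (fun p => p.1 ≠ p.2)).val.map (fun p => p.1 - p.2)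

/-- The multiset `Δ(D, E)` of external differences `x - y` for `x ∈ D`, `y ∈ E`. -/
def extDiff (D E : Finset G) : Multiset G :=
  (D ×ˢ E).val.map (fun p => p.1 - p.2)

/-- The finset `G^*` of nonzero elements of `G`. -/
def Gstar (G : Type*) [AddCommGroup G] [Fintype G] [DecidableEq G] : Finset G :=
  Finset.univ.erase 0

/-- `A` is a `(v, k, lam, mu)` partial difference set in `G`:
`Δ(A) = lam • A^* + mu • (G^* \ A)`. -/
def IsPDS (A : Finset G) (v k lam mu : ℕ) : Prop :=
  Fintype.card G = v ∧ A.card = k ∧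
    intDiff A = lam • (A.erase 0).val + mu • (Gstar G \ A).val

/-- `D` is a `(v, k, lam, mu)` skew partial difference set corresponding to the
`(v, k, lam, mu)`-PDS `A`: `Δ(D) = lam • A^* + mu • (G^* \ A)`. -/
def IsSkewPDS (D A : Finset G) (v k lam mu : ℕ) : Prop :=
  IsPDS A v k lam mu ∧ D.card = k ∧
    intDiff D = lam • (A.erase 0).val + mu • (Gstar G \ A).val

/-- `D` is an `(n, m, k₁, …, k_m; lam, mu)` disjoint partial difference family relative
to `T`: the `D i` are pairwise disjoint subsets of `G^*` of sizes `k i`, and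
`∑ i, Δ(D i) = lam • T + mu • (G^* \ T)`. -/
def IsDPDF {ι : Type*} [Fintype ι] (D : ι → Finset G) (n m : ℕ) (k : ι → ℕ)
    (T : Finset G) (lam mu : ℕ) : Prop :=
  Fintype.card G = n ∧ Fintype.card ι = m ∧
    (∀ i, (0 : G) ∉ D i) ∧ (∀ i, (D i).card = k i) ∧
    (Pairwise (fun i j => Disjoint (D i) (D j))) ∧
    ∑ i, intDiff (D i) = lam • T.val + mu • (Gstar G \ T).val

/-- `D` is an `(n, m, k₁, …, k_m; lam, mu)` external partial difference family relative
to `T`: the `D i` are pairwise disjoint subsets of `G^*` of sizes `k i`, and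
`∑_{i ≠ j}, Δ(D i, D j) = lam • T + mu • (G^* \ T)`. -/
def IsEPDF {ι : Type*} [Fintype ι] [DecidableEq ι] (D : ι → Finset G) (n m : ℕ)
    (k : ι → ℕ) (T : Finset G) (lam mu : ℕ) : Prop :=
  Fintype.card G = n ∧ Fintype.card ι = m ∧
    (∀ i, (0 : G) ∉ D i) ∧ (∀ i, (D i).card = k i) ∧
    (Pairwise (fun i j => Disjoint (D i) (D j))) ∧
    ∑ i, ∑ j ∈ Finset.univ.erase i, extDiff (D i) (D j)
      = lam • T.val + mu • (Gstar G \ T).val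

/-- `D` is an `(n, m, k₁, …, k_m, lam)` disjoint difference family:
`∑ i, Δ(D i) = lam • G^*`. -/
def IsDDF {ι : Type*} [Fintype ι] (D : ι → Finset G) (n m : ℕ) (k : ι → ℕ)
    (lam : ℕ) : Prop :=
  Fintype.card G = n ∧ Fintype.card ι = m ∧
    (∀ i, (0 : G) ∉ D i) ∧ (∀ i, (D i).card = k i) ∧
    (Pairwise (fun i j => Disjoint (D i) (D j))) ∧
    ∑ i, intDiff (D i) = lam • (Gstar G).val

/-- `D` is an `(n, m, k₁, …, k_m, lam)` external difference family:
`∑_{i ≠ j}, Δ(D i, D j) = lam • G^*`. -/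
def IsEDF {ι : Type*} [Fintype ι] [DecidableEq ι] (D : ι → Finset G) (n m : ℕ)
    (k : ι → ℕ) (lam : ℕ) : Prop :=
  Fintype.card G = n ∧ Fintype.card ι = m ∧
    (∀ i, (0 : G) ∉ D i) ∧ (∀ i, (D i).card = k i) ∧
    (Pairwise (fun i j => Disjoint (D i) (D j))) ∧
    ∑ i, ∑ j ∈ Finset.univ.erase i, extDiff (D i) (D j) = lam • (Gstar G).val

end Defs

section Cyclotomy

variable {F : Type*} [Field F] [Fintype F] [DecidableEq F]

/-- The cyclotomic class `C_i^e = α^i ⟨α^e⟩` of order `e` in the finite field `F`,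
with respect to the primitive element `α`.  (Since `α` has multiplicative order at most
`|F| - 1`, letting `j` range over `0, …, |F| - 1` captures the whole class.) -/
def cycClass (α : F) (e i : ℕ) : Finset F :=
  (Finset.range (Fintype.card F)).image (fun j => α ^ (e * j + i))

/-- `α` is a primitive element of the finite field `F`: every nonzero element of `F`
is a power of `α`. -/
def IsPrimitiveElt (α : F) : Prop :=
  ∀ x : F, x ≠ 0 → ∃ n : ℕ, α ^ n = x

end Cyclotomy

/-!
Let `K` be the subfield of order `ℓ`. On `F^*` the `±1`-valued indicator of `D` is the sum of an odd
function supported on the squares and an even function supported on the nonsquares, both depending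
only on the discrete logarithm modulo `8`. Cross terms between an odd and an even function cancel in
the autocorrelation, so the differences of `D` are governed by the two separate autocorrelations.
Each function is multiplied by a character of `K^*` under scaling by `K^*`, which reduces its
autocorrelation to sums over the affine lines of direction `K`. For the even function these depend
on `ℓ` alone; for the odd one they are given by the coordinates `(a, b)` of an octic Eisenstein sum,
which satisfy `a² + 2b² = ℓ`, and `D` has the required differences as soon as `b² = 1`.

As `ℓ = d² + 2 · 1²`, Brahmagupta's identity forces `b² = 1` unless the characteristic `p` divides
both `a` and `b`. This is impossible: modulo `p` the Eisenstein sum is a unit times a binomial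
coefficient, which is prime to `p` by Kummer's theorem.
-/

section Autocorrelation

variable {G R : Type*} [AddCommGroup G] [Fintype G] [CommRing R]

/-- The periodic autocorrelation of a function on a finite abelian group. -/
def autocorr (f : G → R) (z : G) : R :=
  ∑ x, f x * f (x + z)

theorem sum_autocorr (f : G → R) : ∑ z, autocorr f z = (∑ x, f x) ^ 2 := by
  simp only [autocorr]
  rw [Finset.sum_comm, sq, Finset.sum_mul]
  refine Finset.sum_congr rfl fun x _ ↦ ?_
  rw [← Finset.mul_sum, ← Equiv.sum_comp (Equiv.addLeft x) f]
  rfl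

theorem autocorr_add_of_odd_of_even {f g : G → R} (hf : f.Odd) (hg : g.Even) (z : G) :
    autocorr (f + g) z = autocorr f z + autocorr g z := by
  have cross_terms : ∑ x, f x * g (x + z) = -∑ x, g x * f (x + z) := by
    rw [← Equiv.sum_comp (Equiv.subLeft (-z)), ← Finset.sum_neg_distrib]
    refine Finset.sum_congr rfl fun x _ ↦ ?_
    have hfx : f (-z - x) = -f (x + z) := by rw [← hf, neg_add_rev, sub_eq_add_neg]
    have hgx : g (-z - x + z) = g x := by rw [← hg]; congr 1; abel
    rw [Equiv.subLeft_apply, hfx, hgx]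
    ring
  simp only [autocorr, Pi.add_apply, add_mul, mul_add, Finset.sum_add_distrib, cross_terms]
  ring

end Autocorrelation

section Differences

variable {G : Type*} [AddCommGroup G] [DecidableEq G]

theorem count_intDiff (D : Finset G) {z : G} (hz : z ≠ 0) :
    (intDiff D).count z = #{x ∈ D | x + z ∈ D} := by
  rw [intDiff, Multiset.count_map, ← Finset.filter_val, Finset.card_val, Finset.filter_filter]
  refine Finset.card_nbij' Prod.snd (fun x ↦ (x + z, x)) ?_ ?_ ?_ ?_
  · rintro ⟨x, y⟩ h
    simp only [coe_filter, mem_product, Set.mem_ofPred_eq] at h ⊢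
    obtain ⟨⟨hx, hy⟩, -, rfl⟩ := h
    simpa [hy] using hx
  · intro x h
    simp only [coe_filter, mem_product, Set.mem_ofPred_eq] at h ⊢
    simpa [h.1, h.2] using hz
  · rintro ⟨x, y⟩ h
    simp only [coe_filter, Set.mem_ofPred_eq] at h
    simp [h.2.2]
  · exact fun _ _ ↦ rfl

theorem zero_notMem_intDiff (D : Finset G) : (0 : G) ∉ intDiff D := by
  simp only [intDiff, Multiset.mem_map, mem_val, mem_filter, sub_eq_zero]
  rintro ⟨p, ⟨-, hne⟩, heq⟩
  exact hne heq

/-- The `±1`-valued indicator of `D` on the nonzero elements of `G`, extended by `0` at `0`. -/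
def signFun (D : Finset G) (x : G) : ℤ :=
  if x = 0 then 0 else if x ∈ D then 1 else -1

theorem signFun_eq {D : Finset G} (hD : 0 ∉ D) (x : G) :
    signFun D x = 2 * (if x ∈ D then 1 else 0) - 1 + if x = 0 then 1 else 0 := by
  rcases eq_or_ne x 0 with rfl | hx
  · simp [signFun, hD]
  · by_cases h : x ∈ D <;> simp [signFun, hx, h]

variable [Fintype G]

theorem intDiff_eq_of_forall_card {D A : Finset G} {lam mu : ℕ}
    (h : ∀ z ≠ 0, #{x ∈ D | x + z ∈ D} = if z ∈ A then lam else mu) :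
    intDiff D = lam • (A.erase 0).val + mu • (Gstar G \ A).val := by
  ext z
  rcases eq_or_ne z 0 with rfl | hz
  · have hA : 0 ∉ Gstar G \ A := by simp [Gstar]
    rw [Multiset.count_add, Multiset.count_nsmul, Multiset.count_nsmul,
      Multiset.count_eq_zero_of_notMem (zero_notMem_intDiff D),
      Multiset.count_eq_zero_of_notMem (Finset.notMem_erase 0 A),
      Multiset.count_eq_zero_of_notMem hA, mul_zero, mul_zero, add_zero]
  · rw [count_intDiff D hz, h z hz]
    by_cases hA : z ∈ A <;> simp [hz, hA, Gstar, Finset.nodup]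

theorem sum_signFun {D : Finset G} (hD : 0 ∉ D) :
    ∑ x, signFun D x = 2 * #D - Fintype.card G + 1 := by
  simp only [signFun_eq hD, Finset.sum_add_distrib, Finset.sum_sub_distrib, ← Finset.mul_sum]
  simp

theorem autocorr_signFun {D : Finset G} (hD : 0 ∉ D) {z : G} (hz : z ≠ 0) :
    autocorr (signFun D) z =
      4 * #{x ∈ D | x + z ∈ D} - 4 * #D + Fintype.card G + signFun D z + signFun D (-z) := by
  have hpair (x : G) : signFun D x * signFun D (x + z) =
      4 * (if x ∈ D ∧ x + z ∈ D then 1 else 0) - 2 * (if x ∈ D then 1 else 0)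
        - 2 * (if x + z ∈ D then 1 else 0) + 1
        + (if x = 0 then signFun D z else 0) + if x = -z then signFun D (-z) else 0 := by
    rcases eq_or_ne x 0 with rfl | hx
    · by_cases h : z ∈ D <;> simp [signFun, hD, hz, h]
    rcases eq_or_ne x (-z) with rfl | hxz
    · by_cases h : -z ∈ D <;> simp [signFun, hD, hz, h]
    · have hxz' : x + z ≠ 0 := fun h ↦ hxz (eq_neg_of_add_eq_zero_left h)
      by_cases h : x ∈ D <;> by_cases h' : x + z ∈ D <;> simp [signFun, hx, hxz, hxz', h, h']
  have hshift : ∑ x, (if x + z ∈ D then 1 else 0 : ℤ) = ∑ x, if x ∈ D then 1 else 0 :=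
    Equiv.sum_comp (Equiv.addRight z) fun x ↦ (if x ∈ D then 1 else 0 : ℤ)
  have hcount : ∑ x, (if x ∈ D ∧ x + z ∈ D then 1 else 0 : ℤ) = #{x ∈ D | x + z ∈ D} := by
    rw [Finset.sum_boole, ← Finset.filter_filter, Finset.filter_mem_eq_inter, Finset.univ_inter]
  simp only [autocorr, hpair, Finset.sum_add_distrib, Finset.sum_sub_distrib, ← Finset.mul_sum,
    hshift, hcount]
  simp only [Finset.sum_boole, Finset.filter_mem_eq_inter, Finset.univ_inter,
    Finset.sum_ite_eq', Finset.mem_univ, if_true, Finset.sum_const, Finset.card_univ, nsmul_one]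
  ring

theorem card_eq_of_sum_signFun_eq_zero {D : Finset G} (hD : 0 ∉ D)
    (hsum : ∑ x, signFun D x = 0) : #D = (Fintype.card G - 1) / 2 := by
  have := sum_signFun hD
  omega

theorem intDiff_eq_of_autocorr_signFun {D A : Finset G} (hG : Fintype.card G % 4 = 1)
    (hD : 0 ∉ D) (hsum : ∑ x, signFun D x = 0)
    (hcorr : ∀ z ≠ 0,
      autocorr (signFun D) z = signFun D z + signFun D (-z) - 1 - 2 * signFun A z) :
    intDiff D = ((Fintype.card G - 5) / 4) • (A.erase 0).val
      + ((Fintype.card G - 1) / 4) • (Gstar G \ A).val := by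
  refine intDiff_eq_of_forall_card fun z hz ↦ ?_
  have hcount := autocorr_signFun hD hz
  have hsize := sum_signFun hD
  rw [hcorr z hz] at hcount
  by_cases hA : z ∈ A
  · have hs : signFun A z = 1 := by simp [signFun, hz, hA]
    rw [if_pos hA]
    omega
  · have hs : signFun A z = -1 := by simp [signFun, hz, hA]
    rw [if_neg hA]
    omega

end Differences

section Characters

variable {K R : Type*} [Field K] [CommRing R]

theorem sq_apply_of_isQuadratic {χ : MulChar K R} (hχ : χ.IsQuadratic) {u : K} (hu : u ≠ 0) :
    χ u ^ 2 = 1 := by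
  rw [← MulChar.pow_apply' _ two_ne_zero, hχ.sq_eq_one, MulChar.one_apply hu.isUnit]

variable [Fintype K]

theorem autocorr_mulChar (χ : MulChar K R) {z : K} (hz : z ≠ 0) :
    autocorr χ z = χ (-1) * χ z ^ 2 * jacobiSum χ χ := by
  rw [autocorr, jacobiSum, Finset.mul_sum,
    ← Equiv.sum_comp (Equiv.mulLeft₀ (-z) (neg_ne_zero.2 hz))]
  refine Finset.sum_congr rfl fun x _ ↦ ?_
  have hx : -z * x + z = z * (1 - x) := by ring
  simp only [Equiv.mulLeft₀_apply, hx, map_mul]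
  rw [← neg_one_mul z, map_mul]
  ring

theorem autocorr_one_mulChar [IsDomain R] {z : K} (hz : z ≠ 0) :
    autocorr (1 : MulChar K R) z = Fintype.card K - 2 := by
  classical
  rw [autocorr_mulChar _ hz, jacobiSum_one_one, MulChar.one_apply hz.isUnit,
    MulChar.one_apply isUnit_neg_one]
  simp

theorem autocorr_of_isQuadratic [IsDomain R] {χ : MulChar K R} (hχ : χ.IsQuadratic)
    (hχ1 : χ ≠ 1) {z : K} (hz : z ≠ 0) : autocorr χ z = -1 := by
  have hJ : jacobiSum χ χ = -χ (-1) := by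
    simpa only [hχ.inv] using jacobiSum_nontrivial_inv hχ1
  rw [autocorr_mulChar χ hz, hJ, sq_apply_of_isQuadratic hχ hz]
  linear_combination -sq_apply_of_isQuadratic hχ (neg_ne_zero.2 (one_ne_zero (α := K)))

end Characters

section Plane

variable {K V R : Type*} [Field K] [Fintype K] [AddCommGroup V] [Fintype V] [Module K V]

theorem sum_eq_sum_sum_of_linearIndependent [AddCommMonoid R] (hV : Module.finrank K V = 2)
    {w z : V} (hwz : LinearIndependent K ![w, z]) (f : V → R) :
    ∑ x, f x = ∑ u : K, ∑ v : K, f (u • w + v • z) := by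
  have hbij : Function.Bijective fun c : K × K ↦ c.1 • w + c.2 • z := by
    refine (Fintype.bijective_iff_injective_and_card _).2 ⟨fun c c' h ↦ ?_, ?_⟩
    · have := LinearIndependent.pair_iff.1 hwz (c.1 - c'.1) (c.2 - c'.2)
        (by simp only [sub_smul]; rw [← sub_eq_zero] at h; rw [← h]; simp only; abel)
      exact Prod.ext (sub_eq_zero.1 this.1) (sub_eq_zero.1 this.2)
    · rw [Fintype.card_prod, Module.card_eq_pow_finrank (K := K) (V := V), hV, sq]
  rw [← hbij.sum_comp, Fintype.sum_prod_type]

variable [CommRing R] {κ : MulChar K R} {f : V → R} (hf : ∀ u x, f (u • x) = κ u * f x)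
include hf

theorem sum_eq_of_smul (hV : Module.finrank K V = 2) {w z : V}
    (hwz : LinearIndependent K ![w, z]) :
    ∑ x, f x = (∑ u, κ u) * (∑ v : K, f (w + v • z) + f z) := by
  classical
  rw [sum_eq_sum_sum_of_linearIndependent hV hwz]
  have hline (u : K) : ∑ v : K, f (u • w + v • z) =
      κ u * ∑ v : K, f (w + v • z) + if u = 0 then (∑ v, κ v) * f z else 0 := by
    rcases eq_or_ne u 0 with rfl | hu
    · simp [hf, Finset.sum_mul, MulChar.map_zero]
    · rw [← Equiv.sum_comp (Equiv.mulLeft₀ u hu), Finset.mul_sum, if_neg hu, add_zero]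
      simp only [Equiv.mulLeft₀_apply, mul_smul, ← smul_add, hf]
  simp only [hline, Finset.sum_add_distrib, Finset.sum_ite_eq', Finset.mem_univ, if_true,
    ← Finset.sum_mul]
  ring

theorem autocorr_eq_of_smul (hκ : ∀ u ≠ 0, κ u ^ 2 = 1) (hV : Module.finrank K V = 2) {w z : V}
    (hwz : LinearIndependent K ![w, z]) :
    autocorr f z =
      (∑ v : K, f (w + v • z)) ^ 2 - ∑ v : K, f (w + v • z) ^ 2 + f z ^ 2 * autocorr κ 1 := by
  classical
  rw [autocorr, sum_eq_sum_sum_of_linearIndependent hV hwz, ← Finset.sum_erase_add _ _ (mem_univ 0)]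
  have hzero : ∑ v : K, f ((0 : K) • w + v • z) * f ((0 : K) • w + v • z + z) =
      f z ^ 2 * autocorr κ 1 := by
    rw [autocorr, Finset.mul_sum]
    refine Finset.sum_congr rfl fun v _ ↦ ?_
    have hv : v • z + z = (v + 1) • z := by rw [add_smul, one_smul]
    rw [zero_smul, zero_add, hv, hf, hf]
    ring
  have hline (u : K) (hu : u ≠ 0) : ∑ v : K, f (u • w + v • z) * f (u • w + v • z + z) =
      ∑ v : K, f (w + v • z) * f (w + (v + u⁻¹) • z) := by
    rw [← Equiv.sum_comp (Equiv.mulLeft₀ u hu)]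
    refine Finset.sum_congr rfl fun v _ ↦ ?_
    have h₁ : u • w + (u * v) • z = u • (w + v • z) := by rw [smul_add, mul_smul]
    have h₂ : u • (w + v • z) + z = u • (w + (v + u⁻¹) • z) := by
      rw [add_smul, smul_add, smul_add, smul_add, smul_inv_smul₀ hu, add_assoc]
    rw [Equiv.mulLeft₀_apply, h₁, h₂, hf, hf]
    linear_combination f (w + v • z) * f (w + (v + u⁻¹) • z) * hκ u hu
  have hnonzero : ∑ u ∈ univ.erase (0 : K), ∑ v : K, f (w + v • z) * f (w + (v + u⁻¹) • z) =
      ∑ v : K, f (w + v • z) * (∑ v' : K, f (w + v' • z) - f (w + v • z)) := by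
    rw [Finset.sum_comm]
    refine Finset.sum_congr rfl fun v _ ↦ ?_
    rw [← Finset.mul_sum, Finset.sum_erase_eq_sub (mem_univ _), inv_zero, add_zero,
      ← Equiv.sum_comp ((Equiv.inv K).trans (Equiv.addLeft v)) fun t ↦ f (w + t • z)]
    rfl
  rw [hzero, Finset.sum_congr rfl fun u hu ↦ hline u (Finset.ne_of_mem_erase hu), hnonzero]
  simp only [mul_sub, Finset.sum_sub_distrib, ← Finset.sum_mul, sq]

end Plane

section DiscreteLog

variable {F : Type*} [Field F] {α : F} {e : ℕ}

/-- The discrete logarithm to base `α`, reduced modulo `e`; it is meaningful when `α` is a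
primitive element and `e ∣ |F| - 1`, and takes the junk value `0` at `x = 0`. -/
noncomputable def dlog (α : F) (e : ℕ) (x : F) : ZMod e :=
  (sInf {n : ℕ | α ^ n = x} : ℕ)

/-- The function on `F` that vanishes at `0` and takes the value `T i` on the `i`-th cyclotomic
class of order `e`. -/
noncomputable def classFun {R : Type*} [Zero R] (α : F) (T : ZMod e → R) (x : F) : R :=
  open scoped Classical in if x = 0 then 0 else T (dlog α e x)

theorem classFun_zero {R : Type*} [Zero R] (T : ZMod e → R) : classFun α T 0 = 0 :=
  if_pos rfl

theorem classFun_of_ne_zero {R : Type*} [Zero R] (T : ZMod e → R) {x : F} (hx : x ≠ 0) :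
    classFun α T x = T (dlog α e x) :=
  if_neg hx

theorem classFun_sq {R : Type*} [MonoidWithZero R] (T : ZMod e → R) (x : F) :
    classFun α (T ^ 2) x = classFun α T x ^ 2 := by
  rcases eq_or_ne x 0 with rfl | hx
  · rw [classFun_zero, classFun_zero, zero_pow two_ne_zero]
  · rw [classFun_of_ne_zero _ hx, classFun_of_ne_zero _ hx, Pi.pow_apply]

variable [Fintype F]

theorem IsPrimitiveElt.isPrimitiveRoot (hα : IsPrimitiveElt α) (hF : 2 < Fintype.card F) :
    IsPrimitiveRoot α (Fintype.card F - 1) := by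
  classical
  have hα0 : α ≠ 0 := by
    rintro rfl
    obtain ⟨x, hx⟩ : ∃ x : F, x ∉ ({0, 1} : Finset F) := by
      by_contra! h
      exact absurd (Finset.card_le_card fun x _ ↦ h x) (by
        rw [Finset.card_univ, Finset.card_pair zero_ne_one]; exact hF.not_ge)
    simp only [mem_insert, mem_singleton, not_or] at hx
    obtain ⟨n, rfl⟩ := hα x hx.1
    rcases n with - | n
    · exact hx.2 (pow_zero 0)
    · exact hx.1 (zero_pow n.succ_ne_zero)
  have hgen (u : Fˣ) : u ∈ Subgroup.zpowers (Units.mk0 α hα0) := by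
    obtain ⟨n, hn⟩ := hα u u.ne_zero
    exact ⟨n, Units.ext (by simpa using hn)⟩
  rw [← Fintype.card_units, ← Nat.card_eq_fintype_card,
    ← orderOf_eq_card_of_forall_mem_zpowers hgen, ← orderOf_units, Units.val_mk0]
  exact IsPrimitiveRoot.orderOf α

variable (hα : IsPrimitiveRoot α (Fintype.card F - 1))
include hα

theorem exists_pow_eq_of_isPrimitiveRoot {x : F} (hx : x ≠ 0) : ∃ n : ℕ, α ^ n = x := by
  have : NeZero (Fintype.card F - 1) := ⟨Nat.sub_ne_zero_of_lt Fintype.one_lt_card⟩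
  obtain ⟨n, -, hn⟩ := hα.eq_pow_of_pow_eq_one (FiniteField.pow_card_sub_one_eq_one x hx)
  exact ⟨n, hn⟩

theorem ne_zero_of_isPrimitiveRoot : α ≠ 0 :=
  hα.ne_zero (Nat.sub_ne_zero_of_lt Fintype.one_lt_card)

theorem pow_eq_pow_iff_modEq_card {m n : ℕ} :
    α ^ m = α ^ n ↔ m ≡ n [MOD Fintype.card F - 1] := by
  have hfin : IsOfFinOrder α := hα.isOfFinOrder (Nat.sub_ne_zero_of_lt Fintype.one_lt_card)
  rw [hfin.pow_eq_pow_iff_modEq, ← hα.eq_orderOf]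

theorem pow_half_card_eq_neg_one (hF : Odd (Fintype.card F)) :
    α ^ ((Fintype.card F - 1) / 2) = -1 := by
  refine (hα.pow (Nat.sub_pos_of_lt Fintype.one_lt_card) ?_).eq_neg_one_of_two_right
  exact (Nat.div_mul_cancel (even_iff_two_dvd.1 (Nat.Odd.sub_odd hF odd_one))).symm

section Dvd

variable (he : e ∣ Fintype.card F - 1)
include he

theorem dlog_pow (n : ℕ) : dlog α e (α ^ n) = n := by
  have hmem : α ^ sInf {m : ℕ | α ^ m = α ^ n} = α ^ n :=
    Nat.sInf_mem (s := {m : ℕ | α ^ m = α ^ n}) ⟨n, rfl⟩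
  rw [dlog, ZMod.natCast_eq_natCast_iff]
  exact ((pow_eq_pow_iff_modEq_card hα).1 hmem).of_dvd he

theorem dlog_mul {x y : F} (hx : x ≠ 0) (hy : y ≠ 0) :
    dlog α e (x * y) = dlog α e x + dlog α e y := by
  obtain ⟨m, rfl⟩ := exists_pow_eq_of_isPrimitiveRoot hα hx
  obtain ⟨n, rfl⟩ := exists_pow_eq_of_isPrimitiveRoot hα hy
  rw [← pow_add, dlog_pow hα he, dlog_pow hα he, dlog_pow hα he, Nat.cast_add]

theorem dlog_pow_apply {x : F} (hx : x ≠ 0) (n : ℕ) : dlog α e (x ^ n) = n * dlog α e x := by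
  obtain ⟨m, rfl⟩ := exists_pow_eq_of_isPrimitiveRoot hα hx
  rw [← pow_mul, dlog_pow hα he, dlog_pow hα he, Nat.cast_mul, mul_comm]

theorem dlog_neg_one (hF : Odd (Fintype.card F)) :
    dlog α e (-1) = ((Fintype.card F - 1) / 2 : ℕ) := by
  rw [← pow_half_card_eq_neg_one hα hF, dlog_pow hα he]

theorem classFun_mul {R : Type*} [Zero R] (T : ZMod e → R) {y : F} (hy : y ≠ 0) (x : F) :
    classFun α T (y * x) = classFun α (fun c ↦ T (dlog α e y + c)) x := by
  rcases eq_or_ne x 0 with rfl | hx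
  · rw [mul_zero, classFun_zero, classFun_zero]
  · rw [classFun_of_ne_zero _ hx, classFun_of_ne_zero _ (mul_ne_zero hy hx), dlog_mul hα he hy hx]

theorem classFun_even {R : Type*} [Zero R] {T : ZMod e → R}
    (hT : T.Periodic (dlog α e (-1))) : (classFun α T).Even := fun x ↦ by
  rw [neg_eq_neg_one_mul, classFun_mul hα he T (neg_ne_zero.2 one_ne_zero)]
  simp only [add_comm (dlog α e (-1)), hT _]

theorem classFun_odd {R : Type*} [NegZeroClass R] {T : ZMod e → R}
    (hT : T.Antiperiodic (dlog α e (-1))) : (classFun α T).Odd := fun x ↦ by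
  rw [neg_eq_neg_one_mul, classFun_mul hα he T (neg_ne_zero.2 one_ne_zero)]
  rcases eq_or_ne x 0 with rfl | hx
  · simp only [classFun_zero, neg_zero]
  · simp only [classFun_of_ne_zero _ hx, add_comm (dlog α e (-1)), hT _]

theorem nsmul_sum_classFun [NeZero e] {R : Type*} [AddCommMonoid R] (T : ZMod e → R) :
    e • ∑ x, classFun α T x = (Fintype.card F - 1) • ∑ c, T c := by
  classical
  have hshift (c : ZMod e) : ∑ x, classFun α T x = ∑ x, classFun α (fun i ↦ T (c + i)) x := by
    have hc : dlog α e (α ^ c.val) = c := by rw [dlog_pow hα he, ZMod.natCast_zmod_val]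
    have hαc : α ^ c.val ≠ 0 := pow_ne_zero _ (ne_zero_of_isPrimitiveRoot hα)
    rw [← Equiv.sum_comp (Equiv.mulLeft₀ _ hαc)]
    simp only [Equiv.mulLeft₀_apply, classFun_mul hα he T hαc, hc]
  calc e • ∑ x, classFun α T x
      = ∑ c : ZMod e, ∑ x, classFun α (fun i ↦ T (c + i)) x := by
        simp only [← hshift, Finset.sum_const, Finset.card_univ, ZMod.card]
    _ = ∑ x : F, if x = 0 then 0 else ∑ c, T c := by
        rw [Finset.sum_comm]
        refine Finset.sum_congr rfl fun x _ ↦ ?_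
        split_ifs with hx
        · simp only [hx, classFun_zero, Finset.sum_const_zero]
        · simp only [classFun_of_ne_zero _ hx]
          exact Equiv.sum_comp (Equiv.addRight (dlog α e x)) T
    _ = (Fintype.card F - 1) • ∑ c, T c := by
        rw [← Finset.sum_erase_add _ _ (mem_univ 0), if_pos rfl, add_zero,
          Finset.sum_congr rfl fun x hx ↦ if_neg (Finset.ne_of_mem_erase hx), Finset.sum_const,
          Finset.card_erase_of_mem (mem_univ _), Finset.card_univ]

theorem sum_classFun_eq_zero [NeZero e] {T : ZMod e → ℤ} (hT : ∑ c, T c = 0) :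
    ∑ x, classFun α T x = 0 := by
  have h := nsmul_sum_classFun hα he T
  rwa [hT, smul_zero, smul_eq_zero_iff_right (NeZero.ne e)] at h

theorem nsmul_autocorr_classFun_zero [NeZero e] {R : Type*} [CommRing R] (T : ZMod e → R) :
    e • autocorr (classFun α T) 0 = (Fintype.card F - 1) • ∑ c, T c ^ 2 := by
  have h := nsmul_sum_classFun hα he (T ^ 2)
  simpa only [autocorr, add_zero, ← sq, classFun_sq, Pi.pow_apply] using h

theorem mem_cycClass_iff [NeZero e] [DecidableEq F] {i : ℕ} {x : F} :
    x ∈ cycClass α e i ↔ x ≠ 0 ∧ dlog α e x = i := by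
  rw [cycClass, Finset.mem_image]
  constructor
  · rintro ⟨j, -, rfl⟩
    exact ⟨pow_ne_zero _ (ne_zero_of_isPrimitiveRoot hα), by simp [dlog_pow hα he]⟩
  · rintro ⟨hx, hi⟩
    obtain ⟨n, rfl⟩ := exists_pow_eq_of_isPrimitiveRoot hα hx
    rw [dlog_pow hα he, ZMod.natCast_eq_natCast_iff] at hi
    set q := Fintype.card F
    have hq : 0 < q - 1 := Nat.sub_pos_of_lt Fintype.one_lt_card
    have hin : i ≤ n + (q - 1) * i := (Nat.le_mul_of_pos_left i hq).trans (Nat.le_add_left _ _)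
    have hmod : i ≡ n + (q - 1) * i [MOD e] := by
      simpa using hi.symm.add ((Nat.modEq_zero_iff_dvd.2 (he.mul_right i)).symm)
    obtain ⟨j, hj⟩ := (Nat.modEq_iff_dvd' hin).1 hmod
    refine ⟨j % (q - 1), Finset.mem_range.2 ((Nat.mod_lt j hq).trans_le (Nat.sub_le q 1)), ?_⟩
    rw [pow_eq_pow_iff_modEq_card hα]
    calc e * (j % (q - 1)) + i
        ≡ e * j + i [MOD q - 1] := ((Nat.mod_modEq j _).mul_left e).add_right i
      _ = n + (q - 1) * i := by omega
      _ ≡ n [MOD q - 1] := by simp [Nat.ModEq]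

end Dvd

theorem castHom_dlog {e' : ℕ} (he' : e' ∣ Fintype.card F - 1) (h : e ∣ e') {x : F} (hx : x ≠ 0) :
    ZMod.castHom h (ZMod e) (dlog α e' x) = dlog α e x := by
  obtain ⟨n, rfl⟩ := exists_pow_eq_of_isPrimitiveRoot hα hx
  rw [dlog_pow hα he', dlog_pow hα (h.trans he'), map_natCast]

theorem signFun_cycClass_two [DecidableEq F] (hF : Odd (Fintype.card F)) (x : F) :
    signFun (cycClass α 2 0) x = quadraticChar F x := by
  have h2 : 2 ∣ Fintype.card F - 1 := even_iff_two_dvd.1 (Nat.Odd.sub_odd hF odd_one)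
  rcases eq_or_ne x 0 with rfl | hx
  · simp [signFun]
  have hsq : x ∈ cycClass α 2 0 ↔ IsSquare x := by
    rw [mem_cycClass_iff hα h2]
    refine ⟨fun ⟨_, h⟩ ↦ ?_, ?_⟩
    · obtain ⟨n, rfl⟩ := exists_pow_eq_of_isPrimitiveRoot hα hx
      rw [dlog_pow hα h2, Nat.cast_zero, ZMod.natCast_eq_zero_iff_even] at h
      exact h.isSquare_pow α
    · rintro ⟨y, rfl⟩
      have hy : y ≠ 0 := left_ne_zero_of_mul hx
      exact ⟨hx, by rw [dlog_mul hα h2 hy hy, Nat.cast_zero, CharTwo.add_self_eq_zero]⟩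
  rw [signFun, if_neg hx, quadraticChar_apply, quadraticCharFun, if_neg hx]
  exact if_congr hsq rfl rfl

theorem isPDS_cycClass_two [DecidableEq F] (hF : Fintype.card F % 4 = 1) :
    IsPDS (cycClass α 2 0) (Fintype.card F) ((Fintype.card F - 1) / 2)
      ((Fintype.card F - 5) / 4) ((Fintype.card F - 1) / 4) := by
  have hodd : Odd (Fintype.card F) := Nat.odd_iff.2 (by omega)
  have hchar : ringChar F ≠ 2 := fun h ↦
    absurd (FiniteField.even_card_of_char_two h) (by omega)
  have hsign : signFun (cycClass α 2 0) = quadraticChar F :=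
    funext (signFun_cycClass_two hα hodd)
  have hzero : 0 ∉ cycClass α 2 0 := fun h ↦
    ((mem_cycClass_iff hα (by omega)).1 h).1 rfl
  have hsum : ∑ x, signFun (cycClass α 2 0) x = 0 := hsign ▸ quadraticChar_sum_zero hchar
  refine ⟨rfl, card_eq_of_sum_signFun_eq_zero hzero hsum,
    intDiff_eq_of_autocorr_signFun hF hzero hsum fun z hz ↦ ?_⟩
  have hneg : quadraticChar F (-z) = quadraticChar F z := by
    rw [neg_eq_neg_one_mul, map_mul, quadraticChar_one_iff_isSquare (neg_ne_zero.2 one_ne_zero) |>.2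
      (FiniteField.isSquare_neg_one_iff.2 (by omega)), one_mul]
  rw [hsign, autocorr_of_isQuadratic (quadraticChar_isQuadratic F) (quadraticChar_ne_one hchar) hz,
    hneg]
  ring

end DiscreteLog

section Arithmetic

theorem mod_eight_eq_three_of_pow {p k : ℕ} (h : p ^ k % 8 = 3) : p % 8 = 3 := by
  have hp : p % 2 = 1 := by
    by_contra hp
    have hk : k ≠ 0 := by rintro rfl; simp at h
    have : Even (p ^ k) := (Nat.even_iff.2 (by omega)).pow_of_ne_zero hk
    rw [Nat.even_iff] at this
    omega
  have hsq : p ^ 2 % 8 = 1 := by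
    have : p % 8 = 1 ∨ p % 8 = 3 ∨ p % 8 = 5 ∨ p % 8 = 7 := by omega
    rcases this with h | h | h | h <;> simp [Nat.pow_mod, h]
  rcases Nat.even_or_odd' k with ⟨i, rfl | rfl⟩
  · rw [pow_mul, Nat.pow_mod, hsq, one_pow] at h
    omega
  · rw [pow_succ, pow_mul, Nat.mul_mod, Nat.pow_mod, hsq, one_pow] at h
    simpa using h

theorem pow_mod_eight_of_mod_eight_eq_three {p : ℕ} (hp : p % 8 = 3) (i : ℕ) :
    p ^ i % 8 = 1 ∨ p ^ i % 8 = 3 := by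
  induction i with
  | zero => simp
  | succ i ih =>
    rw [pow_succ, Nat.mul_mod, hp]
    omega

theorem mod_add_mod_lt_of_dvd {P t : ℕ} (hP : P % 8 = 1 ∨ P % 8 = 3) (hdvd : P ∣ 8 * t + 3) :
    t % P + (3 * t + 1) % P < P := by
  obtain ⟨c, hc⟩ := hdvd
  have hc8 : P % 8 * (c % 8) % 8 = 3 := by
    rw [← Nat.mul_mod, ← hc]
    omega
  have hmod {m r n : ℕ} (h : m = P * n + r) (hr : r < P) : m % P = r := by
    rw [h, Nat.mul_add_mod, Nat.mod_eq_of_lt hr]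
  rcases hP with hP | hP <;> rw [hP] at hc8
  · obtain ⟨s, rfl⟩ : ∃ s, P = 8 * s + 1 := ⟨P / 8, by omega⟩
    obtain ⟨r, rfl⟩ : ∃ r, c = 8 * r + 3 := ⟨c / 8, by omega⟩
    rw [hmod (n := r) (r := 3 * s) (by linarith) (by omega),
      hmod (n := 3 * r + 1) (r := s) (by linarith) (by omega)]
    omega
  · obtain ⟨s, rfl⟩ : ∃ s, P = 8 * s + 3 := ⟨P / 8, by omega⟩
    obtain ⟨r, rfl⟩ : ∃ r, c = 8 * r + 1 := ⟨c / 8, by omega⟩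
    rw [hmod (n := r) (r := s) (by linarith) (by omega),
      hmod (n := 3 * r) (r := 3 * s + 1) (by linarith) (by omega)]
    omega

-- By Kummer's theorem it suffices that adding `t` and `3 * t + 1` in base `p` has no carries.
theorem not_dvd_choose_of_pow_eq {p k t : ℕ} (hp : p.Prime) (ht : p ^ k = 8 * t + 3) :
    ¬ p ∣ (4 * t + 1).choose t := by
  have hp3 : p % 8 = 3 := mod_eight_eq_three_of_pow (k := k) (by omega)
  have hlog : Nat.log p (3 * t + 1 + t) < k :=
    Nat.log_lt_of_lt_pow (by omega) (by omega)
  have hcarry (i : ℕ) (hi : i < k) : t % p ^ i + (3 * t + 1) % p ^ i < p ^ i :=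
    mod_add_mod_lt_of_dvd (pow_mod_eight_of_mod_eight_eq_three hp3 i)
      (ht ▸ pow_dvd_pow p hi.le)
  have hfac : ((3 * t + 1 + t).choose t).factorization p = 0 := by
    rw [Nat.factorization_choose' hp hlog, Finset.card_eq_zero, Finset.filter_eq_empty_iff]
    intro i hi
    exact (hcarry i (Finset.mem_Ico.1 hi).2).not_ge
  rw [show 4 * t + 1 = 3 * t + 1 + t by ring]
  exact fun hdvd ↦ ((Nat.Prime.factorization_pos_of_dvd hp
    (Nat.choose_pos (by omega)).ne' hdvd).ne' hfac)

-- `L` divides `(a - d b)(a + d b) = L (1 - b²)`, hence one factor, which Brahmagupta's identity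
-- `L² = (a d ± n b)² + n (a ∓ d b)²` then forces to vanish.
theorem sq_eq_one_of_sq_add_mul_sq_eq_pow {p k : ℕ} (hp : p.Prime) {n a b d : ℤ} (hn : 2 ≤ n)
    (hpn : ¬ (p : ℤ) ∣ 2 * n) (hd : (p : ℤ) ^ k = d ^ 2 + n)
    (hab : a ^ 2 + n * b ^ 2 = (p : ℤ) ^ k) (hpab : ¬ ((p : ℤ) ∣ a ∧ (p : ℤ) ∣ b)) :
    b ^ 2 = 1 := by
  have hpZ : Prime (p : ℤ) := Nat.prime_iff_prime_int.1 hp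
  have hL : 0 < (p : ℤ) ^ k := pow_pos (Int.natCast_pos.2 hp.pos) k
  have hk : k ≠ 0 := by
    rintro rfl
    nlinarith [sq_nonneg d]
  have hvanish (e : ℤ) (he : (p : ℤ) ^ k = e ^ 2 + n) (hdvd : (p : ℤ) ^ k ∣ a - e * b) :
      b ^ 2 = 1 := by
    have hbrahmagupta : ((p : ℤ) ^ k) ^ 2 = (a * e + n * b) ^ 2 + n * (a - e * b) ^ 2 := by
      linear_combination (p : ℤ) ^ k * he - (e ^ 2 + n) * hab
    have hzero : a - e * b = 0 := by
      by_contra hne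
      have := sq_le_sq' (by linarith [abs_nonneg (a - e * b)])
        (Int.le_of_dvd (abs_pos.2 hne) ((dvd_abs _ _).2 hdvd))
      rw [sq_abs] at this
      nlinarith [sq_nonneg (a * e + n * b)]
    refine mul_left_cancel₀ hL.ne' ?_
    linear_combination hab + b ^ 2 * he - (a + e * b) * hzero
  have hprod : (p : ℤ) ^ k ∣ (a - d * b) * (a + d * b) :=
    ⟨1 - b ^ 2, by linear_combination hab + b ^ 2 * hd⟩
  have hnotboth : ¬ ((p : ℤ) ∣ a - d * b ∧ (p : ℤ) ∣ a + d * b) := by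
    rintro ⟨h₁, h₂⟩
    have hp2 : ¬ (p : ℤ) ∣ 2 := fun h ↦ hpn (h.mul_right n)
    have ha : (p : ℤ) ∣ a :=
      (hpZ.dvd_or_dvd (by simpa [two_mul] using dvd_add h₁ h₂ : (p : ℤ) ∣ 2 * a)).resolve_left hp2
    have hnb : (p : ℤ) ∣ n * b ^ 2 := by
      rw [show n * b ^ 2 = (p : ℤ) ^ k - a ^ 2 by linarith]
      exact dvd_sub (dvd_pow_self _ hk) (dvd_pow ha two_ne_zero)
    have hb := (hpZ.dvd_or_dvd hnb).resolve_left fun h ↦ hpn (h.mul_left 2)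
    exact hpab ⟨ha, hpZ.dvd_of_dvd_pow hb⟩
  by_cases h : (p : ℤ) ∣ a - d * b
  · exact hvanish d hd (hpZ.pow_dvd_of_dvd_mul_right k (fun h' ↦ hnotboth ⟨h, h'⟩) hprod)
  · have := hpZ.pow_dvd_of_dvd_mul_left k h hprod
    exact hvanish (-d) (by rw [neg_sq, hd]) (by simpa [sub_neg_eq_add] using this)

end Arithmetic

section QuadraticExtension

variable {K F : Type*} [Field K] [Fintype K] [Field F] [Algebra K F]

theorem add_pow_card_of_algebra (x y : F) :
    (x + y) ^ Fintype.card K = x ^ Fintype.card K + y ^ Fintype.card K := by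
  simpa only [FiniteField.coe_frobeniusAlgHom] using map_add (FiniteField.frobeniusAlgHom K F) x y

theorem algebraMap_pow_card (u : K) : algebraMap K F u ^ Fintype.card K = algebraMap K F u := by
  rw [← map_pow, FiniteField.pow_card]

theorem linearIndependent_of_pow_card_eq_neg (hK : ringChar K ≠ 2) {β z : F} (hβ0 : β ≠ 0)
    (hβ : β ^ Fintype.card K = -β) (hz : z ≠ 0) : LinearIndependent K ![β * z, z] := by
  refine LinearIndependent.pair_iff.2 fun s t hst ↦ ?_
  have h₁ : algebraMap K F s * β + algebraMap K F t = 0 := by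
    refine (mul_eq_zero.1 ?_).resolve_right hz
    rw [← hst, Algebra.smul_def, Algebra.smul_def]
    ring
  have h₂ : algebraMap K F s * -β + algebraMap K F t = 0 := by
    have := congrArg (· ^ Fintype.card K) h₁
    simpa only [add_pow_card_of_algebra, mul_pow, algebraMap_pow_card, hβ,
      zero_pow Fintype.card_ne_zero] using this
  have h2 : (2 : F) ≠ 0 := by
    rw [← map_ofNat (algebraMap K F) 2]
    exact (map_ne_zero _).2 (Ring.two_ne_zero hK)
  have ht : algebraMap K F t = 0 :=
    (mul_eq_zero.1 (by linear_combination h₁ + h₂ : 2 * algebraMap K F t = 0)).resolve_left h2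
  rw [ht, add_zero] at h₁
  exact ⟨(map_eq_zero _).1 ((mul_eq_zero.1 h₁).resolve_right hβ0), (map_eq_zero _).1 ht⟩

theorem add_algebraMap_ne_zero (hK : ringChar K ≠ 2) {β : F} (hβ0 : β ≠ 0)
    (hβ : β ^ Fintype.card K = -β) (v : K) : β + algebraMap K F v ≠ 0 := by
  intro h
  have hlin := linearIndependent_of_pow_card_eq_neg hK hβ0 hβ one_ne_zero
  refine one_ne_zero (LinearIndependent.pair_iff.1 hlin 1 v ?_).1
  rw [one_smul, mul_one, ← Algebra.algebraMap_eq_smul_one, h]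

variable [Fintype F] {α : F}

theorem card_eq_sq_of_finrank_eq_two (hKF : Module.finrank K F = 2) :
    Fintype.card F = Fintype.card K ^ 2 := by
  rw [Module.card_eq_pow_finrank (K := K) (V := F), hKF]

theorem card_sub_one_eq_mul (hKF : Module.finrank K F = 2) :
    Fintype.card F - 1 = (Fintype.card K + 1) * (Fintype.card K - 1) := by
  rw [card_eq_sq_of_finrank_eq_two hKF, ← Nat.sq_sub_sq, one_pow]

theorem exists_pow_eq_algebraMap (hKF : Module.finrank K F = 2)
    (hα : IsPrimitiveRoot α (Fintype.card F - 1)) {u : K} (hu : u ≠ 0) :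
    ∃ m : ℕ, α ^ ((Fintype.card K + 1) * m) = algebraMap K F u := by
  obtain ⟨n, hn⟩ := exists_pow_eq_of_isPrimitiveRoot hα
    ((map_ne_zero (algebraMap K F)).2 hu)
  have hpow : α ^ (n * (Fintype.card K - 1)) = 1 := by
    rw [pow_mul, hn, ← map_pow, FiniteField.pow_card_sub_one_eq_one u hu, map_one]
  rw [hα.pow_eq_one_iff_dvd, card_sub_one_eq_mul hKF] at hpow
  obtain ⟨m, rfl⟩ := Nat.dvd_of_mul_dvd_mul_right (Nat.sub_pos_of_lt Fintype.one_lt_card) hpow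
  exact ⟨m, hn⟩

theorem exists_pow_card_eq_neg (hK : Odd (Fintype.card K)) (hKF : Module.finrank K F = 2)
    (hα : IsPrimitiveRoot α (Fintype.card F - 1)) :
    ∃ β : F, β ≠ 0 ∧ β ^ Fintype.card K = -β := by
  have hF : Odd (Fintype.card F) := card_eq_sq_of_finrank_eq_two hKF ▸ hK.pow
  have hhalf : (Fintype.card K + 1) / 2 * (Fintype.card K - 1) = (Fintype.card F - 1) / 2 := by
    rw [card_sub_one_eq_mul hKF, Nat.div_mul_right_comm (even_iff_two_dvd.1 hK.add_one)]
  refine ⟨α ^ ((Fintype.card K + 1) / 2), pow_ne_zero _ (ne_zero_of_isPrimitiveRoot hα), ?_⟩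
  rw [← Nat.sub_add_cancel (Fintype.card_pos (α := K)), pow_succ, ← pow_mul,
    Nat.sub_add_cancel (Fintype.card_pos (α := K)), hhalf, pow_half_card_eq_neg_one hα hF,
    neg_one_mul]

theorem exists_pow_eq_algebraMap_and_quadraticChar [DecidableEq K] (hK : ringChar K ≠ 2)
    (hKF : Module.finrank K F = 2) (hα : IsPrimitiveRoot α (Fintype.card F - 1)) {u : K}
    (hu : u ≠ 0) :
    ∃ m : ℕ, α ^ ((Fintype.card K + 1) * m) = algebraMap K F u ∧
      quadraticChar K u = (-1) ^ m := by
  obtain ⟨m, hm⟩ := exists_pow_eq_algebraMap hKF hα hu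
  refine ⟨m, hm, ?_⟩
  have hKodd : Odd (Fintype.card K) := Nat.odd_iff.2 (FiniteField.odd_card_of_char_ne_two hK)
  have hF : Odd (Fintype.card F) := card_eq_sq_of_finrank_eq_two hKF ▸ hKodd.pow
  have hhalf : (Fintype.card K + 1) * m * (Fintype.card K / 2) =
      (Fintype.card F - 1) / 2 * m := by
    obtain ⟨k, hk⟩ := hKodd
    rw [card_sub_one_eq_mul hKF, hk, Nat.add_sub_cancel, mul_left_comm,
      Nat.mul_div_cancel_left _ two_pos, Nat.mul_add_div two_pos]
    ring
  have hquad : (quadraticChar K u : K) = ((-1) ^ m : ℤ) := by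
    refine (algebraMap K F).injective ?_
    rw [quadraticChar_eq_pow_of_char_ne_two' hK, map_pow, ← hm, ← pow_mul, hhalf, pow_mul,
      pow_half_card_eq_neg_one hα hF]
    simp
  have hne : (1 : K) ≠ -1 := (Ring.neg_one_ne_one_of_char_ne_two hK).symm
  rcases quadraticChar_dichotomy hu with h | h <;>
    rcases neg_one_pow_eq_or ℤ m with h' | h' <;> rw [h, h'] at hquad ⊢
  · simp [hne] at hquad
  · simp [hne.symm] at hquad

section OcticClasses

variable (hK : Fintype.card K % 8 = 3) (hKF : Module.finrank K F = 2)
  (hα : IsPrimitiveRoot α (Fintype.card F - 1))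

include hK

theorem ringChar_ne_two_of_card_mod_eight : ringChar K ≠ 2 := fun h ↦
  absurd (FiniteField.even_card_of_char_two h) (by omega)

include hKF

theorem card_mod_sixteen_eq_nine : Fintype.card F % 16 = 9 := by
  obtain ⟨t, ht⟩ : ∃ t, Fintype.card K = 8 * t + 3 := ⟨Fintype.card K / 8, by omega⟩
  rw [card_eq_sq_of_finrank_eq_two hKF, ht]
  ring_nf
  omega

theorem eight_dvd_card_sub_one : 8 ∣ Fintype.card F - 1 := by
  have := card_mod_sixteen_eq_nine hK hKF
  omega

include hα

theorem dlog_neg_one_eq_four : dlog α 8 (-1) = 4 := by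
  have := card_mod_sixteen_eq_nine hK hKF
  rw [dlog_neg_one hα (eight_dvd_card_sub_one hK hKF) (Nat.odd_iff.2 (by omega)),
    show (4 : ZMod 8) = (4 : ℕ) from rfl, ZMod.natCast_eq_natCast_iff, Nat.ModEq]
  omega

theorem dlog_algebraMap [DecidableEq K] {u : K} (hu : u ≠ 0) :
    dlog α 8 (algebraMap K F u) = if quadraticChar K u = 1 then 0 else 4 := by
  obtain ⟨m, hm, hquad⟩ :=
    exists_pow_eq_algebraMap_and_quadraticChar (ringChar_ne_two_of_card_mod_eight hK) hKF hα hu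
  have hK4 : ((Fintype.card K + 1 : ℕ) : ZMod 8) = 4 := by
    rw [show (4 : ZMod 8) = (4 : ℕ) from rfl, ZMod.natCast_eq_natCast_iff, Nat.ModEq]
    omega
  rw [← hm, dlog_pow hα (eight_dvd_card_sub_one hK hKF), Nat.cast_mul, hK4, hquad]
  rcases Nat.even_or_odd m with hm' | hm'
  · obtain ⟨k, rfl⟩ := hm'
    have : ∀ c : ZMod 8, 4 * (c + c) = 0 := by decide
    rw [if_pos (Even.neg_one_pow ⟨k, rfl⟩), Nat.cast_add, this]
  · rw [if_neg (by rw [hm'.neg_one_pow]; decide)]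
    obtain ⟨k, rfl⟩ := hm'
    have : ∀ c : ZMod 8, 4 * (2 * c + 1) = 4 := by decide
    push_cast
    exact this k

theorem classFun_smul_of_periodic {T : ZMod 8 → ℤ} (hT : T.Periodic 4) (u : K) (x : F) :
    classFun α T (u • x) = (1 : MulChar K ℤ) u * classFun α T x := by
  classical
  rcases eq_or_ne u 0 with rfl | hu
  · rw [zero_smul, classFun_zero, MulChar.map_zero, zero_mul]
  have hper (c : ZMod 8) : T (4 + c) = T c := by rw [add_comm, hT]
  rw [Algebra.smul_def, classFun_mul hα (eight_dvd_card_sub_one hK hKF) T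
    ((map_ne_zero _).2 hu), dlog_algebraMap hK hKF hα hu, MulChar.one_apply hu.isUnit, one_mul]
  split_ifs <;> simp only [zero_add, hper]

theorem classFun_smul_of_antiperiodic [DecidableEq K] {T : ZMod 8 → ℤ} (hT : T.Antiperiodic 4)
    (u : K) (x : F) : classFun α T (u • x) = quadraticChar K u * classFun α T x := by
  rcases eq_or_ne u 0 with rfl | hu
  · rw [zero_smul, classFun_zero, MulChar.map_zero, zero_mul]
  rcases eq_or_ne x 0 with rfl | hx
  · rw [smul_zero, classFun_zero, mul_zero]
  have hanti (c : ZMod 8) : T (4 + c) = -T c := by rw [add_comm, hT]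
  rw [Algebra.smul_def, classFun_mul hα (eight_dvd_card_sub_one hK hKF) T
    ((map_ne_zero _).2 hu), dlog_algebraMap hK hKF hα hu, classFun_of_ne_zero _ hx,
    classFun_of_ne_zero _ hx]
  rcases quadraticChar_dichotomy hu with h | h
  · rw [h, if_pos rfl, zero_add, one_mul]
  · rw [h, if_neg (by decide), hanti, neg_one_mul]

section Periodic

variable {w z : F} (hwz : LinearIndependent K ![w, z])
include hwz

theorem eight_mul_line_sum_classFun {T : ZMod 8 → ℤ} (hT : T.Periodic 4) :
    8 * (∑ v : K, classFun α T (w + v • z) + classFun α T z) =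
      (Fintype.card K + 1) * ∑ c, T c := by
  classical
  have hK1 : (∑ u, (1 : MulChar K ℤ) u) = Fintype.card K - 1 := by
    rw [MulChar.sum_one_eq_card_units, Fintype.card_units,
      Nat.cast_sub (Fintype.card_pos (α := K)), Nat.cast_one]
  have hplane := sum_eq_of_smul (classFun_smul_of_periodic hK hKF hα hT) hKF hwz
  have htotal := nsmul_sum_classFun hα (eight_dvd_card_sub_one hK hKF) T
  rw [card_sub_one_eq_mul hKF, nsmul_eq_mul, nsmul_eq_mul, hplane, hK1, Nat.cast_mul,
    Nat.cast_sub (Fintype.card_pos (α := K))] at htotal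
  have hne : (Fintype.card K : ℤ) - 1 ≠ 0 := by omega
  refine mul_left_cancel₀ hne ?_
  push_cast at htotal
  linear_combination htotal

theorem eight_mul_autocorr_classFun_of_periodic {T : ZMod 8 → ℤ} (hT : T.Periodic 4)
    (hsum : ∑ c, T c = 0) :
    8 * autocorr (classFun α T) z =
      8 * Fintype.card K * classFun α T z ^ 2 - (Fintype.card K + 1) * ∑ c, T c ^ 2 := by
  have hline := eight_mul_line_sum_classFun hK hKF hα hwz hT
  have hline_sq := eight_mul_line_sum_classFun hK hKF hα hwz (T := T ^ 2)
    fun c ↦ by simp only [Pi.pow_apply, hT c]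
  rw [hsum, mul_zero, mul_eq_zero_iff_left (by norm_num)] at hline
  simp only [classFun_sq, Pi.pow_apply] at hline_sq
  rw [autocorr_eq_of_smul (classFun_smul_of_periodic hK hKF hα hT)
    (fun u hu ↦ by rw [MulChar.one_apply hu.isUnit, one_pow]) hKF hwz,
    autocorr_one_mulChar one_ne_zero, eq_neg_of_add_eq_zero_left hline]
  linear_combination -hline_sq

theorem eight_mul_autocorr_classFun_of_antiperiodic {T : ZMod 8 → ℤ} (hT : T.Antiperiodic 4) :
    8 * autocorr (classFun α T) z =
      8 * (∑ v : K, classFun α T (w + v • z)) ^ 2 - (Fintype.card K + 1) * ∑ c, T c ^ 2 := by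
  classical
  have hchar := ringChar_ne_two_of_card_mod_eight hK
  have hline_sq := eight_mul_line_sum_classFun hK hKF hα hwz (T := T ^ 2)
    fun c ↦ by simp only [Pi.pow_apply, hT c, neg_sq]
  simp only [classFun_sq, Pi.pow_apply] at hline_sq
  rw [autocorr_eq_of_smul (classFun_smul_of_antiperiodic hK hKF hα hT)
    (fun u hu ↦ sq_apply_of_isQuadratic (quadraticChar_isQuadratic K) hu) hKF hwz,
    autocorr_of_isQuadratic (quadraticChar_isQuadratic K) (quadraticChar_ne_one hchar)
      one_ne_zero]
  linear_combination -hline_sq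

end Periodic

end OcticClasses

end QuadraticExtension

section EisensteinSum

variable {K F : Type*} [Field K] [Fintype K] [Field F] [Fintype F] [Algebra K F] {α β : F}

/-- The number of points of the affine line `β + K` whose discrete logarithm modulo `8` is `j`,
minus the number of those for which it is `j + 4`. For `β ∉ K` these differences are the
coordinates of the Eisenstein sum of an octic character of `F` over `K`. -/
noncomputable def lineDiff (K : Type*) [Field K] [Fintype K] {F : Type*} [Field F] [Algebra K F]
    (α β : F) (j : ZMod 8) : ℤ :=
  #{v : K | dlog α 8 (β + algebraMap K F v) = j} -
    #{v : K | dlog α 8 (β + algebraMap K F v) = j + 4}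

variable (hK : Fintype.card K % 8 = 3) (hKF : Module.finrank K F = 2)
  (hα : IsPrimitiveRoot α (Fintype.card F - 1)) (hβ0 : β ≠ 0) (hβ : β ^ Fintype.card K = -β)

include hK hKF hα hβ0 hβ

-- The Frobenius of `F` over `K` maps `β + v` to `-(β - v)`.
theorem dlog_add_algebraMap_neg (v : K) :
    dlog α 8 (β + algebraMap K F (-v)) = 3 * dlog α 8 (β + algebraMap K F v) + 4 := by
  have h8 := eight_dvd_card_sub_one hK hKF
  have hne := add_algebraMap_ne_zero (ringChar_ne_two_of_card_mod_eight hK) hβ0 hβ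
  have hconj : (β + algebraMap K F v) ^ Fintype.card K = -1 * (β + algebraMap K F (-v)) := by
    rw [add_pow_card_of_algebra, algebraMap_pow_card, hβ, map_neg]
    ring
  have hK3 : (Fintype.card K : ZMod 8) = 3 := by
    rw [show (3 : ZMod 8) = (3 : ℕ) from rfl, ZMod.natCast_eq_natCast_iff, Nat.ModEq]
    omega
  have hlog := congrArg (dlog α 8) hconj
  rw [dlog_pow_apply hα h8 (hne v), dlog_mul hα h8 (neg_ne_zero.2 one_ne_zero) (hne (-v)),
    dlog_neg_one_eq_four hK hKF hα, hK3] at hlog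
  rw [hlog]
  have : (4 + 4 : ZMod 8) = 0 := by decide
  linear_combination -this

theorem card_dlog_add_algebraMap_eq (j : ZMod 8) :
    #{v : K | dlog α 8 (β + algebraMap K F v) = 3 * j + 4} =
      #{v : K | dlog α 8 (β + algebraMap K F v) = j} := by
  have hinv : ∀ i : ZMod 8, 3 * (3 * i + 4) + 4 = i := by decide
  refine Finset.card_equiv (Equiv.neg K) fun v ↦ ?_
  simp only [Finset.mem_filter, Finset.mem_univ, true_and, Equiv.neg_apply,
    dlog_add_algebraMap_neg hK hKF hα hβ0 hβ v]
  exact ⟨fun h ↦ by rw [h, hinv], fun h ↦ by rw [← h, hinv]⟩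

theorem sum_antiperiodic_dlog {R : Type*} [CommRing R] {T : ZMod 8 → R} (hT : T.Antiperiodic 4)
    (c : ZMod 8) :
    ∑ v : K, T (c + dlog α 8 (β + algebraMap K F v)) =
      lineDiff K α β 2 * T (c + 2) + lineDiff K α β 1 * (T (c + 1) - T (c + 3)) := by
  set n : ZMod 8 → ℕ := fun j ↦ #{v : K | dlog α 8 (β + algebraMap K F v) = j} with hn
  have hfiber : ∑ v : K, T (c + dlog α 8 (β + algebraMap K F v)) = ∑ j, n j * T (c + j) := by
    rw [← Finset.sum_fiberwise' univ (fun v : K ↦ dlog α 8 (β + algebraMap K F v))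
      fun j ↦ T (c + j)]
    simp only [hn, Finset.sum_const, nsmul_eq_mul]
  have hsymm := card_dlog_add_algebraMap_eq hK hKF hα hβ0 hβ
  have h04 : n 4 = n 0 := hsymm 0
  have h17 : n 7 = n 1 := hsymm 1
  have h53 : n 3 = n 5 := hsymm 5
  have hT4 : T (c + 4) = -T c := hT c
  have hT5 : T (c + 5) = -T (c + 1) := by rw [← hT, add_assoc]; rfl
  have hT6 : T (c + 6) = -T (c + 2) := by rw [← hT, add_assoc]; rfl
  have hT7 : T (c + 7) = -T (c + 3) := by rw [← hT, add_assoc]; rfl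
  have hsum : ∑ j, n j * T (c + j) =
      n 0 * T (c + 0) + n 1 * T (c + 1) + n 2 * T (c + 2) + n 3 * T (c + 3) + n 4 * T (c + 4)
        + n 5 * T (c + 5) + n 6 * T (c + 6) + n 7 * T (c + 7) :=
    Fin.sum_univ_eight fun j : ZMod 8 ↦ (n j : R) * T (c + j)
  have hdiff (i j : ZMod 8) (hij : i + 4 = j) : lineDiff K α β i = n i - n j := by
    rw [← hij, lineDiff]
  rw [hfiber, hsum, hT4, hT5, hT6, hT7, h04, h17, h53, add_zero, hdiff 2 6 rfl, hdiff 1 5 rfl]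
  push_cast
  ring

theorem sum_classFun_line {T : ZMod 8 → ℤ} (hT : T.Antiperiodic 4) {z : F} (hz : z ≠ 0) :
    ∑ v : K, classFun α T (β * z + v • z) =
      lineDiff K α β 2 * T (dlog α 8 z + 2)
        + lineDiff K α β 1 * (T (dlog α 8 z + 1) - T (dlog α 8 z + 3)) := by
  have hne := add_algebraMap_ne_zero (ringChar_ne_two_of_card_mod_eight hK) hβ0 hβ
  have hpoint (v : K) : classFun α T (β * z + v • z) =
      T (dlog α 8 z + dlog α 8 (β + algebraMap K F v)) := by
    rw [Algebra.smul_def, ← add_mul, classFun_of_ne_zero _ (mul_ne_zero (hne v) hz),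
      dlog_mul hα (eight_dvd_card_sub_one hK hKF) (hne v) hz, add_comm]
  simpa only [hpoint, Int.cast_id] using
    sum_antiperiodic_dlog hK hKF hα hβ0 hβ hT (dlog α 8 z)

end EisensteinSum

section OcticSigns

/-- The odd part of the sign pattern `1, 1, 1, -1, -1, 1, -1, -1` of `C_0 ∪ C_1 ∪ C_2 ∪ C_5` on
the octic classes. -/
def oddSign : ZMod 8 → ℤ := ![1, 0, 1, 0, -1, 0, -1, 0]

/-- The even part of the sign pattern `1, 1, 1, -1, -1, 1, -1, -1` of `C_0 ∪ C_1 ∪ C_2 ∪ C_5` on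
the octic classes. -/
def evenSign : ZMod 8 → ℤ := ![0, 1, 0, -1, 0, 1, 0, -1]

theorem oddSign_antiperiodic : Function.Antiperiodic oddSign 4 := by
  unfold Function.Antiperiodic
  decide

theorem evenSign_periodic : Function.Periodic evenSign 4 := by
  unfold Function.Periodic
  decide

theorem sum_oddSign : ∑ c, oddSign c = 0 := by decide

theorem sum_evenSign : ∑ c, evenSign c = 0 := by decide

theorem sum_oddSign_sq : ∑ c, oddSign c ^ 2 = 4 := by decide

theorem sum_evenSign_sq : ∑ c, evenSign c ^ 2 = 4 := by decide

theorem oddSign_line_sq (a b : ℤ) (c : ZMod 8) :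
    (a * oddSign (c + 2) + b * (oddSign (c + 1) - oddSign (c + 3))) ^ 2 =
      a ^ 2 * (1 - evenSign c ^ 2) + 2 * b ^ 2 * (evenSign c ^ 2 + evenSign c) := by
  obtain h | h | h := (by decide : ∀ c : ZMod 8,
    (evenSign c = 0 ∧ oddSign (c + 2) ^ 2 = 1 ∧ oddSign (c + 1) - oddSign (c + 3) = 0) ∨
    (evenSign c = 1 ∧ oddSign (c + 2) = 0 ∧ (oddSign (c + 1) - oddSign (c + 3)) ^ 2 = 4) ∨
    (evenSign c = -1 ∧ oddSign (c + 2) = 0 ∧ oddSign (c + 1) - oddSign (c + 3) = 0)) c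
  · rw [h.1, h.2.2, mul_zero, add_zero, mul_pow, h.2.1]; ring
  · rw [h.1, h.2.1, mul_zero, zero_add, mul_pow, h.2.2]; ring
  · rw [h.1, h.2.1, h.2.2]; ring

theorem sum_evenSign_combination (a b : ℤ) :
    ∑ c, (a ^ 2 * (1 - evenSign c ^ 2) + 2 * b ^ 2 * (evenSign c ^ 2 + evenSign c)) =
      4 * (a ^ 2 + 2 * b ^ 2) := by
  rw [Finset.sum_add_distrib, ← Finset.mul_sum, ← Finset.mul_sum, Finset.sum_sub_distrib,
    Finset.sum_add_distrib, sum_evenSign, sum_evenSign_sq, Finset.sum_const, Finset.card_univ,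
    ZMod.card]
  norm_num
  ring

variable {K F : Type*} [Field K] [Fintype K] [Field F] [Fintype F] [Algebra K F] {α β : F}
  (hK : Fintype.card K % 8 = 3) (hKF : Module.finrank K F = 2)
  (hα : IsPrimitiveRoot α (Fintype.card F - 1)) (hβ0 : β ≠ 0) (hβ : β ^ Fintype.card K = -β)

include hK hKF hα hβ0 hβ

theorem two_mul_autocorr_oddSign {z : F} (hz : z ≠ 0) :
    2 * autocorr (classFun α oddSign) z =
      2 * (lineDiff K α β 2 ^ 2 * (1 - evenSign (dlog α 8 z) ^ 2)
        + 2 * lineDiff K α β 1 ^ 2 * (evenSign (dlog α 8 z) ^ 2 + evenSign (dlog α 8 z)))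
        - (Fintype.card K + 1) := by
  have hlin := linearIndependent_of_pow_card_eq_neg (ringChar_ne_two_of_card_mod_eight hK) hβ0 hβ hz
  have hcorr := eight_mul_autocorr_classFun_of_antiperiodic hK hKF hα hlin oddSign_antiperiodic
  rw [sum_classFun_line hK hKF hα hβ0 hβ oddSign_antiperiodic hz, oddSign_line_sq,
    sum_oddSign_sq] at hcorr
  linarith

theorem two_mul_autocorr_evenSign {z : F} (hz : z ≠ 0) :
    2 * autocorr (classFun α evenSign) z =
      2 * Fintype.card K * evenSign (dlog α 8 z) ^ 2 - (Fintype.card K + 1) := by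
  have hlin := linearIndependent_of_pow_card_eq_neg (ringChar_ne_two_of_card_mod_eight hK) hβ0 hβ hz
  have hcorr := eight_mul_autocorr_classFun_of_periodic hK hKF hα hlin evenSign_periodic
    sum_evenSign
  rw [classFun_of_ne_zero _ hz, sum_evenSign_sq] at hcorr
  linarith

-- Sum the autocorrelation of the odd part over all shifts: the total is `(∑ x, f x) ^ 2 = 0`.
theorem lineDiff_sq_add_two_mul_sq :
    lineDiff K α β 2 ^ 2 + 2 * lineDiff K α β 1 ^ 2 = Fintype.card K := by
  have h8 := eight_dvd_card_sub_one hK hKF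
  have hq : 0 < Fintype.card F - 1 := Nat.sub_pos_of_lt Fintype.one_lt_card
  set a := lineDiff K α β 2
  set b := lineDiff K α β 1
  set U : ZMod 8 → ℤ := fun c ↦
    2 * (a ^ 2 * (1 - evenSign c ^ 2) + 2 * b ^ 2 * (evenSign c ^ 2 + evenSign c))
      - (Fintype.card K + 1)
  have hzero : 2 * autocorr (classFun α oddSign) 0 = (Fintype.card F - 1 : ℕ) := by
    have h := nsmul_autocorr_classFun_zero hα h8 oddSign
    rw [sum_oddSign_sq, nsmul_eq_mul, nsmul_eq_mul] at h
    push_cast at h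
    linarith
  have htotal : ∑ z, classFun α U z + (Fintype.card F - 1 : ℕ) = 0 := by
    classical
    calc ∑ z, classFun α U z + ((Fintype.card F - 1 : ℕ) : ℤ)
        = ∑ z ∈ univ.erase 0, 2 * autocorr (classFun α oddSign) z
            + 2 * autocorr (classFun α oddSign) 0 := by
          rw [hzero, ← Finset.sum_erase univ (classFun_zero U)]
          congr 1
          refine Finset.sum_congr rfl fun z hz ↦ ?_
          have hz0 := Finset.ne_of_mem_erase hz
          rw [classFun_of_ne_zero _ hz0, two_mul_autocorr_oddSign hK hKF hα hβ0 hβ hz0]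
      _ = 2 * (∑ x, classFun α oddSign x) ^ 2 := by
          rw [Finset.sum_erase_add _ _ (mem_univ 0), ← Finset.mul_sum, sum_autocorr]
      _ = 0 := by rw [sum_classFun_eq_zero hα h8 sum_oddSign, zero_pow two_ne_zero, mul_zero]
  have hU : ∑ c, U c = 8 * (a ^ 2 + 2 * b ^ 2) - 8 * (Fintype.card K + 1) := by
    rw [Finset.sum_sub_distrib, ← Finset.mul_sum, sum_evenSign_combination, Finset.sum_const,
      Finset.card_univ, ZMod.card, nsmul_eq_mul]
    push_cast
    ring
  have hsumU := nsmul_sum_classFun hα h8 U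
  rw [nsmul_eq_mul, nsmul_eq_mul, hU, eq_neg_of_add_eq_zero_left htotal] at hsumU
  refine mul_left_cancel₀ (Int.natCast_pos.2 hq).ne' ?_
  push_cast at hsumU
  linarith

end OcticSigns

section PowerSums

variable {F : Type*} [Field F] [Fintype F]

theorem sum_pow_eq_ite {i : ℕ} (hi : i ≠ 0) :
    ∑ x : F, x ^ i = if Fintype.card F - 1 ∣ i then -1 else 0 := by
  classical
  rw [← FiniteField.sum_pow_units F i, ← Finset.sum_erase_add _ _ (mem_univ 0), zero_pow hi,
    add_zero, Finset.sum_subtype (univ.erase (0 : F)) (p := (· ≠ 0)) (by simp)]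
  exact (unitsEquivNeZero.sum_comp fun x : {x : F // x ≠ 0} ↦ (x : F) ^ i).symm

/-- A power sum integrand that detects the Eisenstein sums of order `8` over a subfield `K` of order
`8 * t + 3`: it is invariant under `Kˣ`, vanishes on `K`, and for `β ^ card K = -β` it agrees on
the line `β + K` with an octic character up to a constant factor. -/
def lineWeight {F : Type*} [Field F] (t : ℕ) (x : F) : F :=
  (x ^ (8 * t + 3) - x) ^ (4 * t + 1) * x ^ (7 * ((2 * t + 1) * (4 * t + 1)))

theorem lineWeight_eq_sum {F : Type*} [Field F] (t : ℕ) (x : F) :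
    lineWeight t x = ∑ j ∈ range (4 * t + 2),
      (-1) ^ (4 * t + 1 - j) * ((4 * t + 1).choose j : F) *
        x ^ ((8 * t + 2) * (j + 7 * t + 4)) := by
  rw [lineWeight, sub_eq_add_neg, add_pow, Finset.sum_mul]
  refine Finset.sum_congr rfl fun j hj ↦ ?_
  obtain ⟨i, hi⟩ := Nat.exists_eq_add_of_le (Finset.mem_range_succ_iff.1 hj)
  have hexp : (8 * t + 2) * (j + 7 * t + 4) =
      (8 * t + 3) * j + i + 7 * ((2 * t + 1) * (4 * t + 1)) := by
    linear_combination hi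
  rw [hexp, pow_add, pow_add, pow_mul, neg_pow, show 4 * t + 1 - j = i by omega]
  ring

-- Among the exponents of `lineWeight_eq_sum`, only the one of index `j = t` is divisible by
-- `card F - 1 = (8 * t + 2) * (8 * t + 4)`.
theorem sum_lineWeight {t : ℕ} (hF : Fintype.card F = (8 * t + 3) ^ 2) :
    ∑ x : F, lineWeight t x = (-1) ^ t * ((4 * t + 1).choose t : F) := by
  have hq : Fintype.card F - 1 = (8 * t + 2) * (8 * t + 4) := by
    rw [hF]
    exact Nat.sub_eq_of_eq_add (by ring)
  have hdvd {j : ℕ} (hj : j < 4 * t + 2) :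
      Fintype.card F - 1 ∣ (8 * t + 2) * (j + 7 * t + 4) ↔ j = t := by
    rw [hq, Nat.mul_dvd_mul_iff_left (by omega)]
    refine ⟨?_, fun h ↦ ⟨1, by omega⟩⟩
    rintro ⟨c, hc⟩
    obtain rfl : c = 1 := by nlinarith
    omega
  have hterm (j : ℕ) (hj : j ∈ range (4 * t + 2)) :
      ∑ x : F, (-1) ^ (4 * t + 1 - j) * ((4 * t + 1).choose j : F) *
          x ^ ((8 * t + 2) * (j + 7 * t + 4)) =
        if j = t then (-1) ^ t * ((4 * t + 1).choose t : F) else 0 := by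
    rw [← Finset.mul_sum, sum_pow_eq_ite (by positivity)]
    simp only [hdvd (Finset.mem_range.1 hj)]
    split_ifs with h
    · rw [h, show 4 * t + 1 - t = t + 2 * t + 1 by omega, pow_succ, pow_add, pow_mul (-1 : F) 2]
      ring
    · rw [mul_zero]
  simp only [lineWeight_eq_sum]
  rw [Finset.sum_comm, Finset.sum_congr rfl hterm, Finset.sum_ite_eq',
    if_pos (Finset.mem_range.2 (by omega))]

variable {α : F} (hα : IsPrimitiveRoot α (Fintype.card F - 1))

include hα

theorem pow_eq_pow_val_dlog {e s : ℕ} (he : e ∣ Fintype.card F - 1) (hs : α ^ (s * e) = 1) {x : F}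
    (hx : x ≠ 0) : x ^ s = (α ^ s) ^ (dlog α e x).val := by
  obtain ⟨n, rfl⟩ := exists_pow_eq_of_isPrimitiveRoot hα hx
  rw [dlog_pow hα he, ZMod.val_natCast, ← pow_eq_pow_mod n (by rw [← pow_mul, hs]), ← pow_mul,
    ← pow_mul, mul_comm]

end PowerSums

section Nonvanishing

variable {K F : Type*} [Field K] [Fintype K] [Field F] [Algebra K F] {α β : F}

theorem lineWeight_smul {t : ℕ} (ht : Fintype.card K = 8 * t + 3) {u : K} (hu : u ≠ 0) (x : F) :
    lineWeight t (u • x) = lineWeight t x := by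
  have hu1 : algebraMap K F u ^ (8 * t + 2) = 1 := by
    rw [← map_pow, show 8 * t + 2 = Fintype.card K - 1 by omega,
      FiniteField.pow_card_sub_one_eq_one u hu, map_one]
  have hfrob : algebraMap K F u ^ (8 * t + 3) = algebraMap K F u := by
    rw [pow_succ, hu1, one_mul]
  have hexp : 4 * t + 1 + 7 * ((2 * t + 1) * (4 * t + 1)) = (8 * t + 2) * (7 * t + 4) := by
    ring
  have hinv : algebraMap K F u ^ (4 * t + 1) *
      algebraMap K F u ^ (7 * ((2 * t + 1) * (4 * t + 1))) = 1 := by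
    rw [← pow_add, hexp, pow_mul, hu1, one_pow]
  rw [lineWeight, Algebra.smul_def, mul_pow, hfrob, ← mul_sub, mul_pow, mul_pow, mul_mul_mul_comm,
    hinv, one_mul, lineWeight]

variable [Fintype F] (hK : Fintype.card K % 8 = 3) (hKF : Module.finrank K F = 2)
  (hα : IsPrimitiveRoot α (Fintype.card F - 1)) (hβ0 : β ≠ 0) (hβ : β ^ Fintype.card K = -β)

include hK hKF hβ0 hβ

theorem sum_lineWeight_eq_line {t : ℕ} (ht : Fintype.card K = 8 * t + 3) :
    ∑ x : F, lineWeight t x =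
      -((-2 * β) ^ (4 * t + 1) *
        ∑ v : K, (β + algebraMap K F v) ^ (7 * ((2 * t + 1) * (4 * t + 1)))) := by
  classical
  have hsmul (u : K) (x : F) : lineWeight t (u • x) = (1 : MulChar K F) u * lineWeight t x := by
    rcases eq_or_ne u 0 with rfl | hu
    · simp [lineWeight, MulChar.map_zero]
    · rw [MulChar.one_apply (isUnit_iff_ne_zero.2 hu), one_mul, lineWeight_smul ht hu x]
  have hunits : ∑ u, (1 : MulChar K F) u = -1 := by
    rw [MulChar.sum_one_eq_card_units, Fintype.card_units, Nat.cast_sub Fintype.card_pos,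
      ← map_natCast (algebraMap K F), FiniteField.cast_card_eq_zero, map_zero, Nat.cast_one,
      zero_sub]
  have hline (v : K) : lineWeight t (β * 1 + v • 1) = (-2 * β) ^ (4 * t + 1) *
      (β + algebraMap K F v) ^ (7 * ((2 * t + 1) * (4 * t + 1))) := by
    rw [lineWeight, mul_one, Algebra.smul_def, mul_one, ← ht, add_pow_card_of_algebra,
      algebraMap_pow_card, hβ]
    ring
  have hone : lineWeight t (1 : F) = 0 := by simp [lineWeight]
  rw [sum_eq_of_smul hsmul hKF (linearIndependent_of_pow_card_eq_neg
    (ringChar_ne_two_of_card_mod_eight hK) hβ0 hβ one_ne_zero), hunits, hone, add_zero,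
    neg_one_mul, Finset.sum_congr rfl fun v _ ↦ hline v, Finset.mul_sum]

include hα

theorem sum_add_algebraMap_pow {s : ℕ} (hs : α ^ (s * 4) = -1) :
    ∑ v : K, (β + algebraMap K F v) ^ s =
      lineDiff K α β 2 * (α ^ s) ^ 2 + lineDiff K α β 1 * (α ^ s - (α ^ s) ^ 3) := by
  have hs8 : α ^ (s * 8) = 1 := by
    rw [show s * 8 = s * 4 * 2 by ring, pow_mul, hs, neg_one_sq]
  have hanti : Function.Antiperiodic (fun c : ZMod 8 ↦ (α ^ s) ^ c.val) 4 := fun c ↦ by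
    have hval : (c + 4).val = (c.val + 4) % 8 := ZMod.val_add c 4
    change (α ^ s) ^ (c + 4).val = -(α ^ s) ^ c.val
    rw [hval, ← pow_eq_pow_mod _ (by rw [← pow_mul, hs8]), pow_add, ← pow_mul α s 4, hs,
      mul_neg_one]
  have hne := add_algebraMap_ne_zero (ringChar_ne_two_of_card_mod_eight hK) hβ0 hβ
  have hsum := sum_antiperiodic_dlog hK hKF hα hβ0 hβ hanti 0
  simp only [zero_add] at hsum
  rw [Finset.sum_congr rfl fun v _ ↦
    pow_eq_pow_val_dlog hα (eight_dvd_card_sub_one hK hKF) hs8 (hne v), hsum]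
  have hval : (1 : ZMod 8).val = 1 ∧ (2 : ZMod 8).val = 2 ∧ (3 : ZMod 8).val = 3 := by decide
  rw [hval.1, hval.2.1, hval.2.2, pow_one]

-- If `p` divided both, the Eisenstein sum would vanish in `F`, and with it a binomial coefficient
-- that is prime to `p`.
theorem not_dvd_lineDiff (p : ℕ) [CharP F p] :
    ¬ ((p : ℤ) ∣ lineDiff K α β 2 ∧ (p : ℤ) ∣ lineDiff K α β 1) := by
  rintro ⟨h₂, h₁⟩
  rw [← CharP.intCast_eq_zero_iff F p] at h₁ h₂
  have : CharP K p := (Algebra.charP_iff K F p).2 ‹_›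
  obtain ⟨k, hp, hk⟩ := FiniteField.card K p
  obtain ⟨t, ht⟩ : ∃ t, Fintype.card K = 8 * t + 3 := ⟨Fintype.card K / 8, by omega⟩
  have hF : Fintype.card F = (8 * t + 3) ^ 2 := by
    rw [card_eq_sq_of_finrank_eq_two hKF, ht]
  have hhalf : (Fintype.card F - 1) / 2 = (2 * t + 1) * (4 * t + 1) * 4 := by
    have : (8 * t + 3) ^ 2 = 2 * ((2 * t + 1) * (4 * t + 1) * 4) + 1 := by ring
    omega
  have hs : α ^ (7 * ((2 * t + 1) * (4 * t + 1)) * 4) = -1 := by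
    rw [mul_assoc, ← hhalf, mul_comm, pow_mul,
      pow_half_card_eq_neg_one hα (by rw [hF]; exact Odd.pow ⟨4 * t + 1, by ring⟩)]
    exact Odd.neg_one_pow (by decide)
  have hchoose : (-1) ^ t * ((4 * t + 1).choose t : F) = 0 := by
    rw [← sum_lineWeight hF, sum_lineWeight_eq_line hK hKF hβ0 hβ ht,
      sum_add_algebraMap_pow hK hKF hα hβ0 hβ hs, h₁, h₂]
    ring
  have hzero := (mul_eq_zero.1 hchoose).resolve_left (pow_ne_zero t (neg_ne_zero.2 one_ne_zero))
  exact not_dvd_choose_of_pow_eq hp (hk.symm.trans ht) ((CharP.cast_eq_zero_iff F p _).1 hzero)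

end Nonvanishing

section LineDiffValues

variable {K F : Type*} [Field K] [Fintype K] [Field F] [Fintype F] [Algebra K F] {α β : F}
  (hK : Fintype.card K % 8 = 3) (hKF : Module.finrank K F = 2)
  (hα : IsPrimitiveRoot α (Fintype.card F - 1))

include hK hKF hα

theorem lineDiff_one_sq (hβ0 : β ≠ 0) (hβ : β ^ Fintype.card K = -β) {d : ℤ}
    (hd : (Fintype.card K : ℤ) = d ^ 2 + 2) : lineDiff K α β 1 ^ 2 = 1 := by
  obtain ⟨p, _⟩ := CharP.exists K
  obtain ⟨k, hp, hk⟩ := FiniteField.card K p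
  have : CharP F p := (Algebra.charP_iff K F p).1 ‹_›
  have hp8 : p % 8 = 3 := mod_eight_eq_three_of_pow (k := k) (by rw [← hk, hK])
  have hkZ : (p : ℤ) ^ (k : ℕ) = Fintype.card K := by rw [hk, Nat.cast_pow]
  have hp4 : ¬ (p : ℤ) ∣ 2 * 2 := by
    rw [show (2 * 2 : ℤ) = (4 : ℕ) from rfl, Int.natCast_dvd_natCast]
    intro h
    have := Nat.le_of_dvd (by decide) h
    obtain rfl : p = 3 := by omega
    exact absurd h (by decide)
  exact sq_eq_one_of_sq_add_mul_sq_eq_pow hp le_rfl hp4 (hkZ.trans hd)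
    ((lineDiff_sq_add_two_mul_sq hK hKF hα hβ0 hβ).trans hkZ.symm)
    (not_dvd_lineDiff hK hKF hα hβ0 hβ p)

theorem classFun_oddSign_odd : (classFun α oddSign).Odd :=
  classFun_odd hα (eight_dvd_card_sub_one hK hKF)
    (dlog_neg_one_eq_four hK hKF hα ▸ oddSign_antiperiodic)

theorem classFun_evenSign_even : (classFun α evenSign).Even :=
  classFun_even hα (eight_dvd_card_sub_one hK hKF)
    (dlog_neg_one_eq_four hK hKF hα ▸ evenSign_periodic)

theorem autocorr_oddSign_add_evenSign {d : ℤ} (hd : (Fintype.card K : ℤ) = d ^ 2 + 2) {z : F}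
    (hz : z ≠ 0) :
    autocorr (classFun α oddSign + classFun α evenSign) z =
      2 * evenSign (dlog α 8 z) - 1 - 2 * (1 - 2 * evenSign (dlog α 8 z) ^ 2) := by
  obtain ⟨β, hβ0, hβ⟩ := exists_pow_card_eq_neg (Nat.odd_iff.2 (by omega)) hKF hα
  have hodd := two_mul_autocorr_oddSign hK hKF hα hβ0 hβ hz
  have heven := two_mul_autocorr_evenSign hK hKF hα hβ0 hβ hz
  have hb := lineDiff_one_sq hK hKF hα hβ0 hβ hd
  have ha : lineDiff K α β 2 ^ 2 = Fintype.card K - 2 := by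
    linarith [lineDiff_sq_add_two_mul_sq hK hKF hα hβ0 hβ]
  rw [ha, hb] at hodd
  rw [autocorr_add_of_odd_of_even (classFun_oddSign_odd hK hKF hα)
    (classFun_evenSign_even hK hKF hα)]
  linarith

end LineDiffValues

section OcticSet

variable {F : Type*} [Field F] [Fintype F] [DecidableEq F] {α : F}

/-- The union `C_0 ∪ C_1 ∪ C_2 ∪ C_5` of octic cyclotomic classes. -/
def octicSet (α : F) : Finset F :=
  cycClass α 8 0 ∪ cycClass α 8 1 ∪ cycClass α 8 2 ∪ cycClass α 8 5

variable (hα : IsPrimitiveRoot α (Fintype.card F - 1)) (h8 : 8 ∣ Fintype.card F - 1)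

include hα h8

theorem mem_octicSet_iff {x : F} :
    x ∈ octicSet α ↔ x ≠ 0 ∧ dlog α 8 x ∈ ({0, 1, 2, 5} : Finset (ZMod 8)) := by
  simp only [octicSet, Finset.mem_union, mem_cycClass_iff hα h8, Finset.mem_insert,
    Finset.mem_singleton, Nat.cast_zero, Nat.cast_one, Nat.cast_ofNat]
  tauto

theorem zero_notMem_octicSet : (0 : F) ∉ octicSet α := fun h ↦
  ((mem_octicSet_iff hα h8).1 h).1 rfl

theorem signFun_octicSet :
    signFun (octicSet α) = classFun α oddSign + classFun α evenSign := by
  funext x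
  rcases eq_or_ne x 0 with rfl | hx
  · simp [signFun, classFun_zero]
  have hsign : ∀ c : ZMod 8, (if c ∈ ({0, 1, 2, 5} : Finset (ZMod 8)) then 1 else -1) =
      oddSign c + evenSign c := by decide
  rw [Pi.add_apply, classFun_of_ne_zero _ hx, classFun_of_ne_zero _ hx, signFun, if_neg hx,
    ← hsign]
  exact if_congr ((mem_octicSet_iff hα h8).trans (and_iff_right hx)) rfl rfl

theorem sum_signFun_octicSet : ∑ x, signFun (octicSet α) x = 0 := by
  simp only [signFun_octicSet hα h8, Pi.add_apply, Finset.sum_add_distrib,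
    sum_classFun_eq_zero hα h8 sum_oddSign, sum_classFun_eq_zero hα h8 sum_evenSign, add_zero]

theorem signFun_cycClass_two_eq_evenSign {z : F} (hz : z ≠ 0) :
    signFun (cycClass α 2 0) z = 1 - 2 * evenSign (dlog α 8 z) ^ 2 := by
  have hsign : ∀ c : ZMod 8,
      (if ZMod.castHom (by decide : 2 ∣ 8) (ZMod 2) c = 0 then 1 else -1) =
        1 - 2 * evenSign c ^ 2 := by decide
  have h28 : 2 ∣ 8 := by decide
  rw [signFun, if_neg hz, ← hsign, castHom_dlog hα h8 h28 hz]
  refine if_congr ?_ rfl rfl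
  rw [mem_cycClass_iff hα (h28.trans h8), Nat.cast_zero, and_iff_right hz]

theorem signFun_octicSet_add_neg {K : Type*} [Field K] [Fintype K] [Algebra K F]
    (hK : Fintype.card K % 8 = 3) (hKF : Module.finrank K F = 2) {z : F} (hz : z ≠ 0) :
    signFun (octicSet α) z + signFun (octicSet α) (-z) = 2 * evenSign (dlog α 8 z) := by
  rw [signFun_octicSet hα h8, Pi.add_apply, Pi.add_apply, classFun_oddSign_odd hK hKF hα,
    classFun_evenSign_even hK hKF hα, classFun_of_ne_zero evenSign hz]
  ring

end OcticSet

theorem exists_subfield_card_eq {F : Type*} [Field F] [Fintype F] {l n : ℕ} (hn : n ≠ 0)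
    (hl : Fintype.card F = l ^ n) :
    ∃ K : Subfield F, Nat.card K = l := by
  obtain ⟨p, k, hp, hk, rfl⟩ := (isPrimePow_nat_iff l).1
    ((isPrimePow_pow_iff hn).1 (hl ▸ FiniteField.isPrimePow_card F))
  have : Fact p.Prime := ⟨hp⟩
  have : CharP F p := charP_of_card_eq_prime_pow (hl.trans (pow_mul p k n).symm)
  let _ : Algebra (ZMod p) F := ZMod.algebra F p
  have hrank : Module.finrank (ZMod p) F = k * n := Nat.pow_right_injective hp.two_le <| by
    simp only [FiniteField.pow_finrank_eq_card p F, hl, pow_mul]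
  obtain ⟨f⟩ := FiniteField.nonempty_algHom_of_finrank_dvd (F := ZMod p) (K := GaloisField p k)
    (L := F) (by rw [GaloisField.finrank p hk.ne', hrank]; exact dvd_mul_right k n)
  refine ⟨f.toRingHom.fieldRange, ?_⟩
  rw [← GaloisField.card p k hk.ne']
  exact (Nat.card_congr (Equiv.ofInjective f f.injective)).symm

/-- Let `q = ℓ²` where `ℓ = d² + 2 ≡ 3 (mod 8)` is a prime power and `d` an
integer.  Then `D = C_0^8 ∪ C_1^8 ∪ C_2^8 ∪ C_5^8` is a skew Paley
`(q,(q-1)/2,(q-5)/4,(q-1)/4)`-PDS corresponding to the Paley PDS `C_0^2`. -/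
theorem stmt_7 {F : Type*} [Field F] [Fintype F] [DecidableEq F]
    (l : ℕ) (hlpp : IsPrimePow l) (hl8 : l % 8 = 3)
    (d : ℤ) (hd : (l : ℤ) = d ^ 2 + 2)
    (q : ℕ) (hq : Fintype.card F = q) (hql : q = l ^ 2)
    (α : F) (hα : IsPrimitiveElt α) :
    IsSkewPDS (cycClass α 8 0 ∪ cycClass α 8 1 ∪ cycClass α 8 2 ∪ cycClass α 8 5)
      (cycClass α 2 0) q ((q - 1) / 2) ((q - 5) / 4) ((q - 1) / 4) := by
  change IsSkewPDS (octicSet α) _ _ _ _ _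
  have hF : Fintype.card F = l ^ 2 := hq.trans hql
  obtain ⟨K, hKl⟩ := exists_subfield_card_eq two_ne_zero hF
  have : Fintype K := Fintype.ofFinite K
  rw [Nat.card_eq_fintype_card] at hKl
  subst hq hKl
  have hKF : Module.finrank K F = 2 := Nat.pow_right_injective Fintype.one_lt_card
    (Module.card_eq_pow_finrank (K := K) (V := F) ▸ hF)
  have hq16 := card_mod_sixteen_eq_nine hl8 hKF
  have hroot := hα.isPrimitiveRoot (by omega)
  have h8 := eight_dvd_card_sub_one hl8 hKF
  have hzero := zero_notMem_octicSet hroot h8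
  have hsum := sum_signFun_octicSet hroot h8
  refine ⟨isPDS_cycClass_two hroot (by omega), card_eq_of_sum_signFun_eq_zero hzero hsum,
    intDiff_eq_of_autocorr_signFun (by omega) hzero hsum fun z hz ↦ ?_⟩
  rw [signFun_octicSet_add_neg hroot h8 hl8 hKF hz, signFun_cycClass_two_eq_evenSign hroot h8 hz,
    signFun_octicSet hroot h8, autocorr_oddSign_add_evenSign hl8 hKF hroot hd hz]
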